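/- arXiv:math/0003103 — 2 statements merged into one kernel-verified Lean document; each statement's English description precedes it below -/
import Mathlib

section
/- Let m ≤ n and l ≥ 0 be natural numbers, let a ∈ ℂ^n, and let φ : Δ^m → ℂ^n be a holomorphic map on the unit polydisc Δ^m ⊂ ℂ^m with φ(0) = a whose differential at 0 is injective (i.e., rank_0 φ = m). Then the set V = { f ∈ P^l_n : the l-jet of f ∘ φ at 0 vanishes } is a complex linear subspace of P^l_n whose codimension equals the binomial coefficient (l+m choose m); that is, the quotient space P^l_n / V has complex dimension (l+m)!/(l!·m!). -/
/-!
A holomorphic germ at `0` has vanishing `l`-jet iff it is `O(‖z‖ ^ (l + 1))`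
(`jet_eq_zero_iff_isBigO`), so `V` is the space of `f` with `f ∘ φ = O(‖z‖ ^ (l + 1))`, clearly a
subspace.

For its codimension, let `A` be a linear left inverse of the differential of `φ` at `0`. Then
`ψ z = A (φ z - a)` has the identity as its differential at `0`, so by the inverse function theorem
it is a local biholomorphism fixing `0`, with inverse `χ` (`exists_linear_chart`). Substituting the
affine map `x ↦ A (x - a)` sends a polynomial `p` of degree at most `l` in `m` variables to one in
`n` variables whose restriction along `φ` is `p ∘ ψ`. Modulo `V` this is a bijection:

* injective, since `p ∘ ψ = O(‖z‖ ^ (l + 1))` gives `p = O(‖w‖ ^ (l + 1))` on composing with `χ`,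
  and a polynomial of degree at most `l` with this property is zero;
* surjective, since for the Taylor polynomial `p` of `f ∘ φ ∘ χ` of degree `l` the difference
  `f ∘ φ - p ∘ ψ` is `O(‖z‖ ^ (l + 1))`.

Hence the codimension is the dimension `(l + m).choose m` of the space of polynomials of degree at
most `l` in `m` variables.

The theory of holomorphic functions of several variables enters through
`differentiableOn_fderiv_of_holomorphic`: the derivative of a holomorphic map is again holomorphic,
which follows from Cauchy's integral formula on complex lines.
-/

/-! ### Derivatives of holomorphic maps in several variables -/

section Holomorphic

open Filter Topology Metric Asymptotics

variable {E F : Type} [NormedAddCommGroup E] [NormedSpace ℂ E]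
  [NormedAddCommGroup F] [NormedSpace ℂ F]

/-- Cauchy's estimate, from the one-variable estimate on each complex line through `z`. -/
theorem cauchy_fderiv_bound {f : E → F} {z : E} {r C : ℝ} (hr : 0 < r)
    (hd : ∀ w ∈ closedBall z r, DifferentiableAt ℂ f w)
    (hC : ∀ w ∈ closedBall z r, ‖f w‖ ≤ C) : ‖fderiv ℂ f z‖ ≤ C / r := by
  have hC0 : 0 ≤ C := (norm_nonneg _).trans (hC z (mem_closedBall_self hr.le))
  refine ContinuousLinearMap.opNorm_le_bound _ (by positivity) fun v => ?_
  rcases eq_or_ne v 0 with rfl | hv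
  · simp
  have hv' : 0 < ‖v‖ := norm_pos_iff.2 hv
  have hmem : ∀ t ∈ closedBall (0 : ℂ) (r / ‖v‖), z + t • v ∈ closedBall z r := by
    intro t ht
    rw [mem_closedBall_zero_iff, le_div_iff₀ hv'] at ht
    simpa [norm_smul] using ht
  have hdiff : ∀ t ∈ closedBall (0 : ℂ) (r / ‖v‖),
      DifferentiableAt ℂ (fun t : ℂ => f (z + t • v)) t := fun t ht =>
    (hd _ (hmem t ht)).comp (g := f) (f := fun t : ℂ => z + t • v) t (by fun_prop)
  have h := Complex.norm_deriv_le_of_forall_mem_sphere_norm_le (c := 0) (C := C)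
    (f := fun t : ℂ => f (z + t • v)) (div_pos hr hv')
    (DifferentiableOn.diffContOnCl fun t ht =>
      (hdiff t (closure_ball_subset_closedBall ht)).differentiableWithinAt)
    (fun t ht => hC _ (hmem t (sphere_subset_closedBall ht)))
  have hz : DifferentiableAt ℂ f (z + (0 : ℂ) • v) := by
    simpa using hd z (mem_closedBall_self hr.le)
  rw [hz.deriv_comp_add_smul] at h
  simp only [zero_smul, add_zero] at h
  refine h.trans (le_of_eq ?_)
  field_simp

/-- Around every point of an open set on which `f` is holomorphic there is a closed ball, contained
in that set, on which `fderiv ℂ f` is bounded. -/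
theorem exists_ball_bounds {f : E → F} {U : Set E} (hU : IsOpen U)
    (hf : DifferentiableOn ℂ f U) {z₀ : E} (hz : z₀ ∈ U) :
    ∃ r > 0, ∃ M, closedBall z₀ r ⊆ U ∧ ∀ w ∈ closedBall z₀ r, ‖fderiv ℂ f w‖ ≤ M := by
  have hcont : ContinuousAt f z₀ := (hf.differentiableAt (hU.mem_nhds hz)).continuousAt
  have h1 : ∀ᶠ w in 𝓝 z₀, ‖f w‖ < ‖f z₀‖ + 1 :=
    hcont.norm.eventually (gt_mem_nhds (by simp))
  obtain ⟨R, hR, hRs⟩ := nhds_basis_closedBall.mem_iff.1 (h1.and (hU.mem_nhds hz))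
  refine ⟨R / 2, by positivity, (‖f z₀‖ + 1) / (R / 2), fun w hw => (hRs ?_).2, fun w hw => ?_⟩
  · exact closedBall_subset_closedBall (by linarith) hw
  · have hsub : closedBall w (R / 2) ⊆ closedBall z₀ R := by
      apply closedBall_subset_closedBall'
      have := mem_closedBall.1 hw
      linarith
    exact cauchy_fderiv_bound (by positivity)
      (fun y hy => hf.differentiableAt (hU.mem_nhds (hRs (hsub hy)).2))
      (fun y hy => (hRs (hsub hy)).1.le)

theorem continuousOn_fderiv_of_holomorphic {f : E → F} {U : Set E} (hU : IsOpen U)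
    (hf : DifferentiableOn ℂ f U) : ContinuousOn (fderiv ℂ f) U := by
  intro z₀ hz
  apply ContinuousAt.continuousWithinAt
  obtain ⟨r, hr, M, hrU, hM⟩ := exists_ball_bounds hU hf hz
  have hdiff : ∀ w ∈ closedBall z₀ r, DifferentiableAt ℂ f w :=
    fun w hw => hf.differentiableAt (hU.mem_nhds (hrU hw))
  -- Cauchy's estimate for the translated difference `y ↦ f (z + y) - f (z₀ + y)`.
  have key : ∀ z ∈ closedBall z₀ (r / 2),
      ‖fderiv ℂ f z - fderiv ℂ f z₀‖ ≤ M / (r / 2) * ‖z - z₀‖ := by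
    intro z hz
    have hmem : ∀ y ∈ closedBall (0 : E) (r / 2),
        z + y ∈ closedBall z₀ r ∧ z₀ + y ∈ closedBall z₀ r := by
      intro y hy
      simp only [mem_closedBall, dist_eq_norm, sub_zero] at hy hz ⊢
      constructor
      · calc ‖z + y - z₀‖ = ‖(z - z₀) + y‖ := by congr 1; abel
          _ ≤ _ := norm_add_le _ _
          _ ≤ r := by linarith
      · simpa using hy.trans (by linarith)
    have hd1 : ∀ y ∈ closedBall (0 : E) (r / 2), DifferentiableAt ℂ (fun y => f (z + y)) y :=
      fun y hy => (hdiff _ (hmem y hy).1).comp (g := f) (f := fun y => z + y) y (by fun_prop)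
    have hd2 : ∀ y ∈ closedBall (0 : E) (r / 2), DifferentiableAt ℂ (fun y => f (z₀ + y)) y :=
      fun y hy => (hdiff _ (hmem y hy).2).comp (g := f) (f := fun y => z₀ + y) y (by fun_prop)
    have h0 : (0 : E) ∈ closedBall (0 : E) (r / 2) := mem_closedBall_self (by positivity)
    have h := cauchy_fderiv_bound (f := fun y => f (z + y) - f (z₀ + y)) (z := 0)
      (r := r / 2) (C := M * ‖z - z₀‖) (by positivity)
      (fun y hy => (hd1 y hy).sub (hd2 y hy)) (fun y hy => by
        have := (convex_closedBall z₀ r).norm_image_sub_le_of_norm_fderiv_le (𝕜 := ℂ) hdiff hM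
          (hmem y hy).2 (hmem y hy).1
        simpa using this)
    rw [fderiv_fun_sub (hd1 0 h0) (hd2 0 h0), fderiv_comp_add_left, fderiv_comp_add_left] at h
    simp only [add_zero] at h
    exact h.trans (le_of_eq (by ring))
  rw [ContinuousAt, tendsto_iff_norm_sub_tendsto_zero]
  refine squeeze_zero' (g := fun z => M / (r / 2) * ‖z - z₀‖)
    (Eventually.of_forall fun _ => norm_nonneg _) ?_ ?_
  · filter_upwards [closedBall_mem_nhds z₀ (half_pos hr)] with z hz using key z hz
  · have : ContinuousAt (fun z => M / (r / 2) * ‖z - z₀‖) z₀ := by fun_prop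
    simpa [ContinuousAt] using this

/-- The derivative of a holomorphic map is holomorphic: Cauchy's integral formula on complex lines
gives every directional derivative as a parametric integral, to be differentiated under the
integral sign. -/
theorem differentiableOn_fderiv_of_holomorphic [FiniteDimensional ℂ E] [CompleteSpace F]
    {f : E → F} {U : Set E} (hU : IsOpen U) (hf : DifferentiableOn ℂ f U) :
    DifferentiableOn ℂ (fderiv ℂ f) U := by
  -- As `E` is finite-dimensional, it suffices to treat each directional derivative.
  suffices h : ∀ v, DifferentiableOn ℂ (fun z => fderiv ℂ f z v) U by
    let e₁ := ContinuousLinearEquiv.ofFinrankEq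
      (Module.finrank_fin_fun (n := Module.finrank ℂ E) ℂ).symm
    let e₂ := (e₁.arrowCongr (1 : F ≃L[ℂ] F)).trans
      (ContinuousLinearEquiv.piRing (Fin (Module.finrank ℂ E)))
    rw [← Function.id_comp (fderiv ℂ f), ← e₂.symm_comp_self]
    exact e₂.symm.differentiable.comp_differentiableOn (differentiableOn_pi.mpr fun i => h _)
  intro v z₀ hz
  apply DifferentiableAt.differentiableWithinAt
  obtain ⟨r, hr, M, hrU, hM⟩ := exists_ball_bounds hU hf hz
  have hdiff : ∀ w ∈ closedBall z₀ r, DifferentiableAt ℂ f w :=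
    fun w hw => hf.differentiableAt (hU.mem_nhds (hrU hw))
  have hcd : ContinuousOn (fderiv ℂ f) (closedBall z₀ r) :=
    (continuousOn_fderiv_of_holomorphic hU hf).mono hrU
  have hcf : ContinuousOn f (closedBall z₀ r) := hf.continuousOn.mono hrU
  set R : ℝ := r / 2 / (‖v‖ + 1) with hRdef
  have hR : 0 < R := by positivity
  have hmem : ∀ z ∈ ball z₀ (r / 2), ∀ t ∈ closedBall (0 : ℂ) R,
      z + t • v ∈ closedBall z₀ r := by
    intro z hz t ht
    rw [mem_closedBall_zero_iff] at ht
    rw [mem_ball, dist_eq_norm] at hz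
    have h1 : ‖t • v‖ ≤ r / 2 := by
      rw [norm_smul]
      calc ‖t‖ * ‖v‖ ≤ R * (‖v‖ + 1) := by gcongr; linarith
        _ = r / 2 := by rw [hRdef]; field_simp
    rw [mem_closedBall, dist_eq_norm]
    calc ‖z + t • v - z₀‖ = ‖(z - z₀) + t • v‖ := by congr 1; abel
      _ ≤ _ := norm_add_le _ _
      _ ≤ r := by linarith
  have hcirc : ∀ θ, circleMap 0 R θ ∈ closedBall (0 : ℂ) R := fun θ =>
    circleMap_mem_closedBall 0 hR.le θ
  set c : ℝ → ℂ := fun θ => deriv (circleMap 0 R) θ * (1 / (circleMap 0 R θ) ^ 2) with hc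
  have hcc : Continuous c := by
    have h0 : ∀ θ, circleMap 0 R θ ^ 2 ≠ 0 := fun θ =>
      pow_ne_zero _ (circleMap_ne_center hR.ne')
    simp only [hc, deriv_circleMap]
    have := continuous_circleMap 0 R
    fun_prop (disch := assumption)
  -- Cauchy's formula for the derivative along the complex line through `z` in direction `v`.
  have hform : ∀ z ∈ ball z₀ (r / 2), fderiv ℂ f z v =
      (2 * Real.pi * Complex.I : ℂ)⁻¹ •
        ∫ θ in (0 : ℝ)..2 * Real.pi, c θ • f (z + circleMap 0 R θ • v) := by
    intro z hz
    have hd : DifferentiableOn ℂ (fun t : ℂ => f (z + t • v)) (closedBall 0 R) := fun t ht =>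
      ((hdiff _ (hmem z hz t ht)).comp (g := f) (f := fun t : ℂ => z + t • v) t
        (by fun_prop)).differentiableWithinAt
    have h := hd.deriv_eq_smul_circleIntegral hR
    have hz0 : DifferentiableAt ℂ f (z + (0 : ℂ) • v) :=
      hdiff _ (hmem z hz 0 (mem_closedBall_self hR.le))
    rw [hz0.deriv_comp_add_smul] at h
    simp only [zero_smul, add_zero, sub_zero] at h
    have h2 : (2 * Real.pi * Complex.I : ℂ) ≠ 0 := Complex.two_pi_I_ne_zero
    rw [eq_inv_smul_iff₀ h2, ← h, circleIntegral]
    simp only [hc, smul_smul]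
  have hcircc := continuous_circleMap 0 R
  have hz₀mem : z₀ ∈ ball z₀ (r / 2) := mem_ball_self (by positivity)
  have hcontF : ∀ z ∈ ball z₀ (r / 2), Continuous fun θ => c θ • f (z + circleMap 0 R θ • v) :=
    fun z hz => hcc.smul (hcf.comp_continuous (by fun_prop) fun θ => hmem z hz _ (hcirc θ))
  have hder := (intervalIntegral.hasFDerivAt_integral_of_dominated_of_fderiv_le (𝕜 := ℂ)
    (μ := MeasureTheory.volume) (a := 0) (b := 2 * Real.pi) (x₀ := z₀)
    (s := ball z₀ (r / 2))
    (F := fun z θ => c θ • f (z + circleMap 0 R θ • v))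
    (F' := fun z θ => c θ • fderiv ℂ f (z + circleMap 0 R θ • v))
    (bound := fun θ => ‖c θ‖ * M)
    (ball_mem_nhds _ (by positivity))
    (by
      filter_upwards [ball_mem_nhds z₀ (half_pos hr)] with z hz
      exact (hcontF z hz).aestronglyMeasurable)
    ((hcontF z₀ hz₀mem).intervalIntegrable _ _)
    (Continuous.aestronglyMeasurable (hcc.smul (hcd.comp_continuous (by fun_prop)
      fun θ => hmem z₀ hz₀mem _ (hcirc θ))))
    (Eventually.of_forall fun θ _ z hz => by
      rw [norm_smul]
      gcongr
      exact hM _ (hmem z hz _ (hcirc θ)))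
    (Continuous.intervalIntegrable (by fun_prop) _ _)
    (Eventually.of_forall fun θ _ z hz => by
      have h1 := (hdiff _ (hmem z hz _ (hcirc θ))).hasFDerivAt
      exact ((hasFDerivAt_comp_add_right (circleMap 0 R θ • v)).2 h1).const_smul
        (c θ))).differentiableAt
  refine (hder.const_smul (2 * Real.pi * Complex.I : ℂ)⁻¹).congr_of_eventuallyEq ?_
  filter_upwards [ball_mem_nhds z₀ (half_pos hr)] with z hz using hform z hz

theorem isBigO_of_fderiv_isBigO {f : E → F} {k : ℕ}
    (hf : ∀ᶠ w in 𝓝 0, DifferentiableAt ℂ f w) (h0 : f 0 = 0)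
    (h : fderiv ℂ f =O[𝓝 0] fun z => ‖z‖ ^ k) : f =O[𝓝 0] fun z => ‖z‖ ^ (k + 1) := by
  obtain ⟨C, hC⟩ := h.bound
  obtain ⟨r, hr, hrs⟩ := nhds_basis_ball.mem_iff.1 (hf.and hC)
  refine IsBigO.of_bound C ?_
  filter_upwards [ball_mem_nhds (0 : E) hr] with z hz
  have hsub : closedBall (0 : E) ‖z‖ ⊆ ball 0 r :=
    closedBall_subset_ball (by simpa using hz)
  have hCk : 0 ≤ C * ‖z‖ ^ k := by
    have := (hrs hz).2
    simp only [norm_pow, norm_norm] at this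
    exact (norm_nonneg _).trans this
  have hb : ∀ w ∈ closedBall (0 : E) ‖z‖, ‖fderiv ℂ f w‖ ≤ C * ‖z‖ ^ k := by
    intro w hw
    have h1 := (hrs (hsub hw)).2
    simp only [norm_pow, norm_norm] at h1
    rw [mem_closedBall_zero_iff] at hw
    rcases le_or_gt 0 C with hC0 | hC0
    · exact h1.trans (by gcongr)
    · refine h1.trans (le_trans ?_ hCk)
      exact mul_nonpos_of_nonpos_of_nonneg hC0.le (by positivity)
  have := (convex_closedBall (0 : E) ‖z‖).norm_image_sub_le_of_norm_fderiv_le (𝕜 := ℂ)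
    (fun w hw => (hrs (hsub hw)).1) hb (mem_closedBall_self (norm_nonneg z))
    (show z ∈ closedBall (0 : E) ‖z‖ by simp)
  simpa [h0, pow_succ, mul_assoc] using this

/-- For `z ≠ 0` this is Cauchy's estimate on the ball of centre `z` and radius `‖z‖`. -/
theorem fderiv_isBigO_of_isBigO {f : E → F} {k : ℕ}
    (hf : ∀ᶠ w in 𝓝 0, DifferentiableAt ℂ f w)
    (h : f =O[𝓝 0] fun z => ‖z‖ ^ (k + 2)) : fderiv ℂ f =O[𝓝 0] fun z => ‖z‖ ^ (k + 1) := by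
  obtain ⟨C, hC, hCb⟩ := h.exists_pos
  obtain ⟨r, hr, hrs⟩ := nhds_basis_ball.mem_iff.1 (hf.and hCb.bound)
  have h00 : f 0 = 0 := by simpa using (hrs (mem_ball_self hr)).2
  refine IsBigO.of_bound (C * 2 ^ (k + 2)) ?_
  filter_upwards [ball_mem_nhds (0 : E) (half_pos hr)] with z hz
  rw [mem_ball_zero_iff] at hz
  rcases eq_or_ne z 0 with rfl | hz0
  · -- At the origin the growth bound itself gives `HasFDerivAt f 0 0`.
    have : HasFDerivAt f (0 : E →L[ℂ] F) 0 := by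
      rw [hasFDerivAt_iff_isLittleO_nhds_zero]
      simp only [zero_add, h00, sub_zero, _root_.zero_apply]
      refine h.trans_isLittleO ?_
      simpa using (isLittleO_norm_pow_id (E' := E) (n := k + 2) (by omega))
    simp [this.fderiv]
  · have hz' : 0 < ‖z‖ := norm_pos_iff.2 hz0
    have hw : ∀ w ∈ closedBall z ‖z‖, ‖w‖ ≤ 2 * ‖z‖ := by
      intro w hw
      rw [mem_closedBall, dist_eq_norm] at hw
      calc ‖w‖ = ‖(w - z) + z‖ := by simp
        _ ≤ _ := norm_add_le _ _
        _ ≤ _ := by linarith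
    have hsub : ∀ w ∈ closedBall z ‖z‖, w ∈ ball (0 : E) r := by
      intro w hw'
      rw [mem_ball_zero_iff]
      linarith [hw w hw']
    have := cauchy_fderiv_bound (f := f) (C := C * (2 * ‖z‖) ^ (k + 2)) hz'
      (fun w hw' => (hrs (hsub w hw')).1) (fun w hw' => by
        have h1 := (hrs (hsub w hw')).2
        simp only [norm_pow, norm_norm] at h1
        refine h1.trans ?_
        gcongr
        exact hw w hw')
    refine this.trans (le_of_eq ?_)
    simp only [norm_pow, norm_norm]
    field_simp
    ring

end Holomorphic

/-! ### Jets of holomorphic germs -/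

section Germs

open Filter Topology Metric Asymptotics

variable {E F : Type} [NormedAddCommGroup E] [NormedSpace ℂ E] [FiniteDimensional ℂ E]
  [NormedAddCommGroup F] [NormedSpace ℂ F] [CompleteSpace F]

theorem eventually_differentiableAt_fderiv {f : E → F} {z : E}
    (hf : ∀ᶠ w in 𝓝 z, DifferentiableAt ℂ f w) :
    ∀ᶠ w in 𝓝 z, DifferentiableAt ℂ (fderiv ℂ f) w := by
  obtain ⟨U, hUs, hU, hzU⟩ := _root_.eventually_nhds_iff.1 hf
  have h := differentiableOn_fderiv_of_holomorphic hU
    (fun w hw => (hUs w hw).differentiableWithinAt)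
  filter_upwards [hU.mem_nhds hzU] with w hw using h.differentiableAt (hU.mem_nhds hw)

theorem contDiffAt_of_eventually_differentiableAt (k : ℕ) :
    ∀ {F : Type} [NormedAddCommGroup F] [NormedSpace ℂ F] [CompleteSpace F] {f : E → F} {z : E},
    (∀ᶠ w in 𝓝 z, DifferentiableAt ℂ f w) → ContDiffAt ℂ k f z := by
  induction k with
  | zero =>
    intro F _ _ _ f z hf
    refine contDiffAt_zero.2 ⟨_, hf, fun w hw => ?_⟩
    exact (DifferentiableAt.continuousAt hw).continuousWithinAt
  | succ k ih =>
    intro F _ _ _ f z hf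
    rw [Nat.cast_add_one]
    refine contDiffAt_succ_iff_hasFDerivAt.2 ?_
    exact ⟨fderiv ℂ f, ⟨_, hf, fun w hw => DifferentiableAt.hasFDerivAt hw⟩,
      ih (eventually_differentiableAt_fderiv hf)⟩

/-- A holomorphic germ has vanishing `l`-jet iff it is `O(‖z‖ ^ (l + 1))`. The induction on `l`
passes to the derivative, by the mean value inequality in one direction and by Cauchy's estimate in
the other. -/
theorem jet_eq_zero_iff_isBigO (l : ℕ) :
    ∀ {F : Type} [NormedAddCommGroup F] [NormedSpace ℂ F] [CompleteSpace F] {f : E → F},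
    (∀ᶠ w in 𝓝 0, DifferentiableAt ℂ f w) →
    ((∀ k ≤ l, iteratedFDeriv ℂ k f 0 = 0) ↔ f =O[𝓝 0] fun z => ‖z‖ ^ (l + 1)) := by
  have hzero : ∀ {F : Type} [NormedAddCommGroup F] [NormedSpace ℂ F] {f : E → F},
      iteratedFDeriv ℂ 0 f 0 = 0 ↔ f 0 = 0 := by
    intro F _ _ f
    rw [← norm_eq_zero, norm_iteratedFDeriv_zero, norm_eq_zero]
  have hval : ∀ {F : Type} [NormedAddCommGroup F] {f : E → F} {k : ℕ},
      (f =O[𝓝 0] fun z => ‖z‖ ^ (k + 1)) → f 0 = 0 := by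
    intro F _ f k h
    obtain ⟨C, hC⟩ := h.bound
    simpa using hC.self_of_nhds
  induction l with
  | zero =>
    intro F _ _ _ f hf
    simp only [Nat.le_zero, forall_eq, hzero]
    refine ⟨fun h => ?_, hval⟩
    have := hf.self_of_nhds.isBigO_sub
    simp only [h, sub_zero] at this
    simpa using this.norm_right
  | succ l ih =>
    intro F _ _ _ f hf
    have hstep : (∀ k ≤ l + 1, iteratedFDeriv ℂ k f 0 = 0) ↔
        f 0 = 0 ∧ ∀ k ≤ l, iteratedFDeriv ℂ k (fderiv ℂ f) 0 = 0 := by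
      have hk : ∀ k, iteratedFDeriv ℂ k (fderiv ℂ f) 0 = 0 ↔ iteratedFDeriv ℂ (k + 1) f 0 = 0 := by
        intro k
        rw [← norm_eq_zero, norm_iteratedFDeriv_fderiv, norm_eq_zero]
      simp only [hk, ← hzero (f := f)]
      refine ⟨fun h => ⟨h 0 (by omega), fun k hk => h _ (by omega)⟩, fun h k hk => ?_⟩
      cases k with
      | zero => exact h.1
      | succ k => exact h.2 k (by omega)
    rw [hstep, ih (eventually_differentiableAt_fderiv hf)]
    exact ⟨fun h => isBigO_of_fderiv_isBigO hf h.1 h.2,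
      fun h => ⟨hval h, fderiv_isBigO_of_isBigO hf h⟩⟩

end Germs

/-! ### Polynomials and Taylor expansion -/

section Polynomials

open Filter Topology Metric Asymptotics

/-- The restriction of a `k`-linear form to the diagonal is a polynomial of degree at most `k`. -/
theorem exists_mvPolynomial_diagonal {m k : ℕ}
    (M : ContinuousMultilinearMap ℂ (fun _ : Fin k => Fin m → ℂ) ℂ) :
    ∃ q : MvPolynomial (Fin m) ℂ, q.totalDegree ≤ k ∧
      ∀ z, MvPolynomial.eval z q = M fun _ => z := by
  classical
  refine ⟨∑ r : Fin k → Fin m, MvPolynomial.C (M fun i => Pi.single (r i) 1) *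
    ∏ i, MvPolynomial.X (r i), ?_, fun z => ?_⟩
  · refine MvPolynomial.totalDegree_finsetSum_le fun r _ => ?_
    refine (MvPolynomial.totalDegree_mul _ _).trans ?_
    rw [MvPolynomial.totalDegree_C, zero_add]
    refine (MvPolynomial.totalDegree_finsetProd _ _).trans ?_
    simp
  · have hz : (fun _ : Fin k => z) =
        fun _ : Fin k => ∑ j : Fin m, z j • (Pi.single j 1 : Fin m → ℂ) := by
      funext _
      exact pi_eq_sum_univ' z
    rw [hz, M.map_sum]
    simp only [map_sum, map_mul, map_prod, MvPolynomial.eval_C, MvPolynomial.eval_X]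
    refine Finset.sum_congr rfl fun r _ => ?_
    rw [M.map_smul_univ (fun i => z (r i)) (fun i => Pi.single (r i) 1), smul_eq_mul, mul_comm]

/-- Taylor's theorem for holomorphic germs, with polynomial of degree at most `l`. -/
theorem exists_taylor_polynomial {m : ℕ} (l : ℕ) {g : (Fin m → ℂ) → ℂ}
    (hg : ∀ᶠ w in 𝓝 0, DifferentiableAt ℂ g w) :
    ∃ p : MvPolynomial (Fin m) ℂ, p.totalDegree ≤ l ∧
      (fun z => g z - MvPolynomial.eval z p) =O[𝓝 0] fun z => ‖z‖ ^ (l + 1) := by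
  choose q hq hqe using fun k => exists_mvPolynomial_diagonal (iteratedFDeriv ℂ k g 0)
  refine ⟨∑ k ∈ Finset.range (l + 1), ((k.factorial : ℂ)⁻¹) • q k, ?_, ?_⟩
  · refine MvPolynomial.totalDegree_finsetSum_le fun k hk => ?_
    refine (MvPolynomial.totalDegree_smul_le _ _).trans ((hq k).trans ?_)
    simpa [Nat.lt_succ_iff] using hk
  -- The complex iterated derivatives restrict to the real ones of the integral Taylor formula.
  have hCD : ∀ k : ℕ, ContDiffAt ℂ k g 0 := fun k =>
    contDiffAt_of_eventually_differentiableAt k hg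
  have hR : ContDiffAt ℝ ((l + 1 : ℕ) : WithTop ℕ∞) g 0 := (hCD (l + 1)).restrict_scalars ℝ
  have hcont : ContinuousAt (iteratedFDeriv ℝ (l + 1) g) 0 :=
    hR.continuousAt_iteratedFDeriv le_rfl
  set B := ‖iteratedFDeriv ℝ (l + 1) g 0‖ + 1 with hB
  have h1 : ∀ᶠ w in 𝓝 0, ‖iteratedFDeriv ℝ (l + 1) g w‖ < B :=
    hcont.norm.eventually (gt_mem_nhds (by simp [hB]))
  obtain ⟨r, hr, hrs⟩ := nhds_basis_ball.mem_iff.1 ((hR.eventually (by simp)).and h1)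
  refine IsBigO.of_bound ((l.factorial : ℝ)⁻¹ * B) ?_
  filter_upwards [ball_mem_nhds _ hr] with z hz
  rw [mem_ball_zero_iff] at hz
  have hseg : ∀ t ∈ Set.Icc (0 : ℝ) 1, (0 : Fin m → ℂ) + t • z ∈ ball (0 : Fin m → ℂ) r := by
    intro t ht
    rw [zero_add, mem_ball_zero_iff, norm_smul, Real.norm_of_nonneg ht.1]
    exact (mul_le_of_le_one_left (norm_nonneg z) ht.2).trans_lt hz
  have hT := map_add_eq_sum_add_integral_iteratedFDeriv (f := g) (x := 0) (y := z) (n := l)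
    (fun t ht => by exact_mod_cast (hrs (hseg t ht)).1)
  have hsum : MvPolynomial.eval z (∑ k ∈ Finset.range (l + 1), ((k.factorial : ℂ)⁻¹) • q k) =
      ∑ k ∈ Finset.range (l + 1),
        ((k.factorial : ℝ)⁻¹) • iteratedFDeriv ℝ k g 0 (fun _ => z) := by
    rw [map_sum]
    refine Finset.sum_congr rfl fun k _ => ?_
    rw [MvPolynomial.smul_eval, hqe, ← (hCD k).restrictScalars_iteratedFDeriv (𝕜 := ℝ)]
    simp
  rw [zero_add] at hT
  rw [hsum, hT, add_sub_cancel_left, norm_smul, norm_inv, mul_assoc]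
  simp only [Real.norm_natCast, norm_pow, norm_norm]
  gcongr
  have hI := intervalIntegral.norm_integral_le_of_norm_le_const (a := (0 : ℝ)) (b := 1)
    (C := B * ‖z‖ ^ (l + 1))
    (f := fun t => (1 - t) ^ l • iteratedFDeriv ℝ (l + 1) g (0 + t • z) (fun _ => z))
    (fun t ht => by
      rw [Set.uIoc_of_le zero_le_one] at ht
      have htI : t ∈ Set.Icc (0 : ℝ) 1 := ⟨ht.1.le, ht.2⟩
      have h2 := (iteratedFDeriv ℝ (l + 1) g (0 + t • z)).le_opNorm (fun _ => z)
      simp only [Finset.prod_const, Finset.card_univ, Fintype.card_fin] at h2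
      have h3 := (hrs (hseg t htI)).2.le
      have h4 : ‖(1 - t) ^ l‖ ≤ 1 := by
        rw [norm_pow, Real.norm_of_nonneg (by linarith [htI.2])]
        exact pow_le_one₀ (by linarith [htI.2]) (by linarith [htI.1])
      rw [norm_smul]
      calc _ ≤ 1 * (B * ‖z‖ ^ (l + 1)) := by
            gcongr
            exact h2.trans (by gcongr)
        _ = _ := one_mul _)
  simpa using hI

theorem polynomial_eq_zero_of_isBigO {q : Polynomial ℂ} {l : ℕ} (hq : q.natDegree ≤ l)
    (h : (fun t : ℂ => q.eval t) =O[𝓝 0] fun t => ‖t‖ ^ (l + 1)) : q = 0 := by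
  by_contra hq0
  obtain ⟨s, hs, hnd⟩ := q.exists_eq_pow_rootMultiplicity_mul_and_not_dvd hq0 0
  set k := q.rootMultiplicity 0 with hk
  have hkl : k ≤ l := by
    rw [hk, ← Polynomial.count_roots]
    exact ((Multiset.count_le_card _ _).trans q.card_roots').trans hq
  apply hnd
  rw [Polynomial.dvd_iff_isRoot, Polynomial.IsRoot]
  obtain ⟨C, hC⟩ := h.bound
  -- Dividing by `t ^ k` on the punctured disc, the cofactor tends to zero.
  have hb : ∀ᶠ t : ℂ in 𝓝[≠] 0, ‖s.eval t‖ ≤ C * ‖t‖ ^ (l + 1 - k) := by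
    filter_upwards [hC.filter_mono nhdsWithin_le_nhds, self_mem_nhdsWithin] with t ht ht0
    have ht0' : 0 < ‖t‖ := norm_pos_iff.2 ht0
    have h1 : q.eval t = t ^ k * s.eval t := by
      conv_lhs => rw [hs]
      simp
    rw [h1, norm_mul, norm_pow, norm_pow, norm_norm,
      show l + 1 = k + (l + 1 - k) by omega, pow_add] at ht
    refine le_of_mul_le_mul_left ?_ (pow_pos ht0' k)
    calc _ ≤ _ := ht
      _ = _ := by ring
  have h2 : Tendsto (fun t : ℂ => s.eval t) (𝓝[≠] 0) (𝓝 0) := by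
    refine squeeze_zero_norm' hb ?_
    have : ContinuousAt (fun t : ℂ => C * ‖t‖ ^ (l + 1 - k)) 0 := by fun_prop
    have h3 : Tendsto (fun t : ℂ => C * ‖t‖ ^ (l + 1 - k)) (𝓝 0) (𝓝 0) := by
      simpa [ContinuousAt, show l + 1 - k ≠ 0 by omega] using this
    exact h3.mono_left nhdsWithin_le_nhds
  exact tendsto_nhds_unique (s.continuous.continuousAt.tendsto.mono_left nhdsWithin_le_nhds) h2

/-- A polynomial of degree at most `l` vanishing to order `l + 1` at the origin is zero: so are its
restrictions to all lines through the origin. -/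
theorem mvPolynomial_eq_zero_of_isBigO {m l : ℕ} {p : MvPolynomial (Fin m) ℂ}
    (hp : p.totalDegree ≤ l)
    (h : (fun z : Fin m → ℂ => MvPolynomial.eval z p) =O[𝓝 0] fun z => ‖z‖ ^ (l + 1)) :
    p = 0 := by
  refine MvPolynomial.funext fun w => ?_
  -- The restriction of `p` to the line through `w`.
  set q : Polynomial ℂ :=
    MvPolynomial.aeval (fun i => Polynomial.C (w i) * Polynomial.X) p with hqdef
  have hqe : ∀ t, q.eval t = MvPolynomial.eval (t • w) p := by
    intro t
    rw [hqdef, ← Polynomial.coe_evalRingHom, MvPolynomial.aeval_def, MvPolynomial.hom_eval₂,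
      ← MvPolynomial.eval₂_id]
    congr 1
    · ext
      simp
    · funext i
      simpa using mul_comm _ _
  have hqd : q.natDegree ≤ l := by
    rw [hqdef, MvPolynomial.aeval_def, MvPolynomial.eval₂_eq]
    refine Polynomial.natDegree_sum_le_of_forall_le _ _ fun d hd => ?_
    refine (Polynomial.natDegree_C_mul_le _ _).trans ?_
    refine (Polynomial.natDegree_prod_le _ _).trans ?_
    refine le_trans (Finset.sum_le_sum fun i _ => ?_)
      ((MvPolynomial.le_totalDegree hd).trans hp)
    refine (Polynomial.natDegree_pow_le).trans ?_
    refine (Nat.mul_le_mul_left _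
      ((Polynomial.natDegree_C_mul_le _ _).trans Polynomial.natDegree_X_le)).trans ?_
    simp
  have htend : Tendsto (fun t : ℂ => t • w) (𝓝 0) (𝓝 0) := by
    have : ContinuousAt (fun t : ℂ => t • w) 0 := by fun_prop
    simpa [ContinuousAt] using this
  have hq0 : q = 0 := by
    refine polynomial_eq_zero_of_isBigO hqd ?_
    simp only [hqe]
    refine (h.comp_tendsto htend).trans ?_
    refine IsBigO.of_bound (‖w‖ ^ (l + 1)) (Eventually.of_forall fun t => ?_)
    simp [norm_smul, mul_pow, mul_comm]
  have := hqe 1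
  simpa [hq0] using this.symm

theorem totalDegree_aeval_le {m n l : ℕ} {p : MvPolynomial (Fin m) ℂ} (hp : p.totalDegree ≤ l)
    {u : Fin m → MvPolynomial (Fin n) ℂ} (hu : ∀ i, (u i).totalDegree ≤ 1) :
    (MvPolynomial.aeval u p).totalDegree ≤ l := by
  rw [MvPolynomial.aeval_def, MvPolynomial.eval₂_eq]
  refine MvPolynomial.totalDegree_finsetSum_le fun d hd => ?_
  refine (MvPolynomial.totalDegree_mul _ _).trans ?_
  rw [MvPolynomial.algebraMap_eq, MvPolynomial.totalDegree_C, zero_add]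
  refine (MvPolynomial.totalDegree_finsetProd _ _).trans ?_
  refine le_trans (Finset.sum_le_sum fun i _ => ?_)
    ((MvPolynomial.le_totalDegree hd).trans hp)
  refine (MvPolynomial.totalDegree_pow _ _).trans ?_
  exact (Nat.mul_le_mul_left _ (hu i)).trans (by simp)

theorem finrank_restrictTotalDegree (m l : ℕ) :
    Module.finrank ℂ (MvPolynomial.restrictTotalDegree (Fin m) ℂ l) = (l + m).choose m := by
  classical
  have hset : {s : Fin m →₀ ℕ | (s.sum fun _ e => e) ≤ l} =
      ((Finset.range (l + 1)).biUnion fun k => (Finset.univ : Finset (Fin m)).finsuppAntidiag k :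
        Finset (Fin m →₀ ℕ)) := by
    ext s
    simp [Finset.mem_finsuppAntidiag, Finsupp.sum_fintype]
  have hcard : ((Finset.range (l + 1)).biUnion
      fun k => (Finset.univ : Finset (Fin m)).finsuppAntidiag k).card = (l + m).choose m := by
    rw [Finset.card_biUnion]
    · simp only [Finset.card_finsuppAntidiag_nat_eq_multichoose, Finset.card_univ,
        Fintype.card_fin]
      have : ∀ l, ∑ k ∈ Finset.range (l + 1), m.multichoose k = (m + 1).multichoose l := by
        intro l
        induction l with
        | zero => simp
        | succ l ih => rw [Finset.sum_range_succ, ih, Nat.multichoose_succ_succ, add_comm]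
      rw [this, Nat.multichoose_eq, show m + 1 + l - 1 = l + m by omega, Nat.choose_symm_add]
    · intro i _ j _ hij
      rw [Function.onFun, Finset.disjoint_left]
      intro s hs hs'
      rw [Finset.mem_finsuppAntidiag] at hs hs'
      exact hij (hs.1.symm.trans hs'.1)
  have h := Module.finrank_eq_nat_card_basis
    (MvPolynomial.basisRestrictSupport ℂ {s : Fin m →₀ ℕ | (s.sum fun _ e => e) ≤ l})
  rw [← hcard, ← Set.ncard_coe_finset, ← hset]
  exact h

end Polynomials

/-! ### Restriction of polynomials along an immersion -/

section Immersion

open Filter Topology Metric Asymptotics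

theorem differentiable_eval_mvPolynomial {n : ℕ} (p : MvPolynomial (Fin n) ℂ) :
    Differentiable ℂ fun x : Fin n → ℂ => MvPolynomial.eval x p := by
  have h := AnalyticOnNhd.eval_mvPolynomial (𝕜 := ℂ) p
  exact fun x => (h x (Set.mem_univ x)).differentiableAt

/-- An immersion germ `φ` has a linear left inverse `A` at first order, and `z ↦ A (φ z - φ 0)` is
then a local biholomorphism fixing the origin, with local inverse `χ`. -/
theorem exists_linear_chart {m n : ℕ} {φ : (Fin m → ℂ) → (Fin n → ℂ)}
    (hφ : ∀ᶠ z in 𝓝 0, DifferentiableAt ℂ φ z) (hrank : Function.Injective (fderiv ℂ φ 0)) :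
    ∃ (A : (Fin n → ℂ) →L[ℂ] (Fin m → ℂ)) (χ : (Fin m → ℂ) → (Fin m → ℂ)),
      (∀ᶠ w in 𝓝 0, DifferentiableAt ℂ χ w) ∧ χ 0 = 0 ∧
      (∀ᶠ z in 𝓝 0, χ (A (φ z - φ 0)) = z) ∧ ∀ᶠ w in 𝓝 0, A (φ (χ w) - φ 0) = w := by
  obtain ⟨A, hA⟩ := LinearMap.exists_leftInverse_of_injective
    (fderiv ℂ φ 0 : (Fin m → ℂ) →ₗ[ℂ] (Fin n → ℂ)) (LinearMap.ker_eq_bot.2 hrank)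
  set A' : (Fin n → ℂ) →L[ℂ] (Fin m → ℂ) := LinearMap.toContinuousLinearMap A with hA'
  set ψ : (Fin m → ℂ) → (Fin m → ℂ) := fun z => A' (φ z - φ 0) with hψ
  have hψd : ∀ᶠ z in 𝓝 0, DifferentiableAt ℂ ψ z := by
    filter_upwards [hφ] with z hz
    exact A'.differentiableAt.comp z (hz.sub_const _)
  have hψ0 : ψ 0 = 0 := by simp [hψ]
  have hψ1 : HasFDerivAt ψ
      ((ContinuousLinearEquiv.refl ℂ (Fin m → ℂ) : (Fin m → ℂ) →L[ℂ] (Fin m → ℂ))) 0 := by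
    have h := A'.hasFDerivAt.comp (0 : Fin m → ℂ) (hφ.self_of_nhds.hasFDerivAt.sub_const (φ 0))
    refine h.congr_fderiv ?_
    ext1 z
    exact LinearMap.congr_fun hA z
  have hcd : ContDiffAt ℂ (1 : ℕ) ψ 0 := contDiffAt_of_eventually_differentiableAt 1 hψd
  have hn : ((1 : ℕ) : WithTop ℕ∞) ≠ 0 := by simp
  have hs := hcd.hasStrictFDerivAt' hψ1 hn
  refine ⟨A', hcd.localInverse hψ1 hn, ?_, ?_, hs.eventually_left_inverse, ?_⟩
  · have h := hcd.to_localInverse hψ1 hn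
    rw [hψ0] at h
    filter_upwards [h.eventually (by simp)] with w hw
    exact hw.differentiableAt hn
  · have h := hcd.localInverse_apply_image hψ1 hn
    rwa [hψ0] at h
  · have h := hs.eventually_right_inverse
    rwa [hψ0] at h

/-- Vanishing to order `l + 1` at the origin is preserved by pulling back along a germ fixing the
origin. -/
theorem isBigO_comp_of_differentiableAt {m l : ℕ} {χ : (Fin m → ℂ) → (Fin m → ℂ)}
    (hχ : DifferentiableAt ℂ χ 0) (hχ0 : χ 0 = 0) {g : (Fin m → ℂ) → ℂ}
    (hg : g =O[𝓝 0] fun z => ‖z‖ ^ (l + 1)) :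
    (fun z => g (χ z)) =O[𝓝 0] fun z => ‖z‖ ^ (l + 1) := by
  have ht : Tendsto χ (𝓝 0) (𝓝 0) := by simpa [ContinuousAt, hχ0] using hχ.continuousAt
  have hb : χ =O[𝓝 0] fun z => z := by simpa [hχ0] using hχ.isBigO_sub
  exact (hg.comp_tendsto ht).trans (hb.norm_norm.pow (l + 1))

/-- The polynomials of degree at most `l` whose restriction along `φ` vanishes to order `l + 1` at
the origin. -/
def vanishingSubmodule {m n : ℕ} (l : ℕ) (φ : (Fin m → ℂ) → (Fin n → ℂ)) :
    Submodule ℂ (MvPolynomial.restrictTotalDegree (Fin n) ℂ l) where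
  carrier := {f | (fun z => MvPolynomial.eval (φ z) (f : MvPolynomial (Fin n) ℂ)) =O[𝓝 0]
    fun z => ‖z‖ ^ (l + 1)}
  add_mem' := by
    intro f g hf hg
    simpa using IsBigO.add hf hg
  zero_mem' := by simpa using isBigO_zero _ _
  smul_mem' := by
    intro c f hf
    simpa [MvPolynomial.smul_eval] using IsBigO.const_mul_left hf c

theorem mem_vanishingSubmodule {m n l : ℕ} {φ : (Fin m → ℂ) → (Fin n → ℂ)}
    {f : MvPolynomial.restrictTotalDegree (Fin n) ℂ l} :
    f ∈ vanishingSubmodule l φ ↔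
      (fun z => MvPolynomial.eval (φ z) (f : MvPolynomial (Fin n) ℂ)) =O[𝓝 0]
        fun z => ‖z‖ ^ (l + 1) :=
  Iff.rfl

/-- Substitution of the affine map `x ↦ A (x - a)` into polynomials of degree at most `l`. -/
theorem exists_affine_substitution {m n : ℕ} (l : ℕ) (A : (Fin n → ℂ) →L[ℂ] (Fin m → ℂ))
    (a : Fin n → ℂ) :
    ∃ S : MvPolynomial.restrictTotalDegree (Fin m) ℂ l →ₗ[ℂ]
        MvPolynomial.restrictTotalDegree (Fin n) ℂ l,
      ∀ p x, MvPolynomial.eval x (S p : MvPolynomial (Fin n) ℂ) =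
        MvPolynomial.eval (A (x - a)) (p : MvPolynomial (Fin m) ℂ) := by
  classical
  let u : Fin m → MvPolynomial (Fin n) ℂ := fun i =>
    ∑ j, MvPolynomial.C (A (Pi.single j 1) i) * (MvPolynomial.X j - MvPolynomial.C (a j))
  have hu : ∀ i, (u i).totalDegree ≤ 1 := by
    intro i
    refine MvPolynomial.totalDegree_finsetSum_le fun j _ => ?_
    refine (MvPolynomial.totalDegree_mul _ _).trans ?_
    rw [MvPolynomial.totalDegree_C, zero_add]
    refine (MvPolynomial.totalDegree_sub _ _).trans ?_
    simp
  have hue : ∀ x i, MvPolynomial.eval x (u i) = A (x - a) i := by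
    intro x i
    conv_rhs => rw [pi_eq_sum_univ' (x - a)]
    simp [u, mul_comm]
  refine ⟨(MvPolynomial.aeval u).toLinearMap.restrict (fun p hp => ?_), fun p x => ?_⟩
  · rw [MvPolynomial.mem_restrictTotalDegree] at hp ⊢
    exact totalDegree_aeval_le hp hu
  · simp only [LinearMap.coe_restrict_apply, AlgHom.toLinearMap_apply]
    rw [MvPolynomial.aeval_def, MvPolynomial.hom_eval₂, ← MvPolynomial.eval₂_id]
    congr 1
    · ext c
      simp
    · funext i
      exact hue x i

/-- In the coordinates `w = A (φ z - φ 0)`, taking Taylor polynomials identifies the quotient with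
the polynomials of degree at most `l` in `m` variables; the inverse is substitution of
`x ↦ A (x - φ 0)`. -/
theorem finrank_quotient_vanishingSubmodule {m n : ℕ} (l : ℕ) {φ : (Fin m → ℂ) → (Fin n → ℂ)}
    (hφ : ∀ᶠ z in 𝓝 0, DifferentiableAt ℂ φ z) (hrank : Function.Injective (fderiv ℂ φ 0)) :
    Module.finrank ℂ (MvPolynomial.restrictTotalDegree (Fin n) ℂ l ⧸ vanishingSubmodule l φ) =
      (l + m).choose m := by
  obtain ⟨A, χ, hχ, hχ0, hleft, hright⟩ := exists_linear_chart hφ hrank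
  obtain ⟨S, hS⟩ := exists_affine_substitution l A (φ 0)
  have hψ : DifferentiableAt ℂ (fun z => A (φ z - φ 0)) 0 :=
    A.differentiableAt.comp 0 (hφ.self_of_nhds.sub_const _)
  have hχt : Tendsto χ (𝓝 0) (𝓝 0) := by
    simpa [ContinuousAt, hχ0] using hχ.self_of_nhds.continuousAt
  have hbij : Function.Bijective ((vanishingSubmodule l φ).mkQ ∘ₗ S) := by
    constructor
    · rw [← LinearMap.ker_eq_bot, LinearMap.ker_eq_bot']
      intro p hp
      rw [LinearMap.comp_apply, Submodule.mkQ_apply, Submodule.Quotient.mk_eq_zero,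
        mem_vanishingSubmodule] at hp
      have h := isBigO_comp_of_differentiableAt hχ.self_of_nhds hχ0 hp
      refine Subtype.ext (mvPolynomial_eq_zero_of_isBigO
        ((MvPolynomial.mem_restrictTotalDegree _ _ _).1 p.2) (h.congr' ?_ EventuallyEq.rfl))
      filter_upwards [hright] with w hw
      rw [hS, hw]
    · intro y
      obtain ⟨f, rfl⟩ := Submodule.mkQ_surjective _ y
      -- The Taylor polynomial of `f ∘ φ` in the coordinates `w = A (φ z - φ 0)`.
      obtain ⟨p, hp, hO⟩ := exists_taylor_polynomial l
        (g := fun w => MvPolynomial.eval (φ (χ w)) (f : MvPolynomial (Fin n) ℂ)) (by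
          filter_upwards [hχ, hχt.eventually hφ] with w hw hw'
          exact (differentiable_eval_mvPolynomial _ _).comp w (hw'.comp w hw))
      refine ⟨⟨p, (MvPolynomial.mem_restrictTotalDegree _ _ _).2 hp⟩, ?_⟩
      rw [LinearMap.comp_apply, Submodule.mkQ_apply, Submodule.mkQ_apply, eq_comm,
        Submodule.Quotient.eq, mem_vanishingSubmodule]
      refine (isBigO_comp_of_differentiableAt hψ (by simp) hO).congr' ?_ EventuallyEq.rfl
      filter_upwards [hleft] with z hz
      rw [Submodule.coe_sub, RingHom.map_sub (MvPolynomial.eval (φ z)), hS, hz]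
  rw [← (LinearEquiv.ofBijective _ hbij).finrank_eq, finrank_restrictTotalDegree]

end Immersion

/-- Let `m ≤ n`, `l ≥ 0`, `a ∈ ℂⁿ`, and let `φ : Δᵐ → ℂⁿ` be a
holomorphic map on the open unit polydisc with `φ 0 = a` whose differential at `0`
is injective.  Then the set of polynomials `f` of degree at most `l` in `n`
variables such that the `l`-jet of `f ∘ φ` at `0` vanishes is a complex linear
subspace of `P^l_n = restrictTotalDegree (Fin n) ℂ l` whose codimension equals
`(l + m).choose m`, i.e. the quotient has complex dimension `(l+m)!/(l!·m!)`. -/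
theorem jet_vanishing_codim (m n l : ℕ) (hmn : m ≤ n) (a : Fin n → ℂ)
    (φ : (Fin m → ℂ) → (Fin n → ℂ))
    (hφ : DifferentiableOn ℂ φ {z : Fin m → ℂ | ∀ i, ‖z i‖ < 1})
    (hφ0 : φ 0 = a)
    (hrank : Function.Injective (fderiv ℂ φ 0)) :
    ∃ V : Submodule ℂ (MvPolynomial.restrictTotalDegree (Fin n) ℂ l),
      ((V : Set (MvPolynomial.restrictTotalDegree (Fin n) ℂ l)) =
        {f : MvPolynomial.restrictTotalDegree (Fin n) ℂ l | ∀ k ≤ l,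
          iteratedFDeriv ℂ k
            (fun z : Fin m → ℂ =>
              MvPolynomial.eval (φ z) (f : MvPolynomial (Fin n) ℂ)) 0 = 0}) ∧
      Module.finrank ℂ
        ((MvPolynomial.restrictTotalDegree (Fin n) ℂ l) ⧸ V) = (l + m).choose m := by
  have hopen : IsOpen {z : Fin m → ℂ | ∀ i, ‖z i‖ < 1} := by
    simp only [Set.ofPred_forall]
    exact isOpen_iInter_of_finite fun i => isOpen_lt (by fun_prop) continuous_const
  have hd : ∀ᶠ z in nhds 0, DifferentiableAt ℂ φ z := by
    filter_upwards [hopen.mem_nhds (x := 0) (by simp)] with z hz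
    exact hφ.differentiableAt (hopen.mem_nhds hz)
  refine ⟨vanishingSubmodule l φ, Set.ext fun f => ?_,
    finrank_quotient_vanishingSubmodule l hd hrank⟩
  exact (jet_eq_zero_iff_isBigO l (hd.mono fun z hz =>
    (differentiable_eval_mvPolynomial _ _).comp z hz)).symm
end

section
/- Let U ⊆ ℂ be a nonempty connected open set and let γ = (γ₁, γ₂, γ₃) : U → ℂ³ be a nonconstant holomorphic map (a parametrized holomorphic curve). Then the set S = { Q ∈ P²₂ : the function z ↦ γ₁(z) + Q(γ₂(z), γ₃(z)) is constant on U } is contained in a coset Q₀ + W of a complex linear subspace W of P²₂ of codimension at least 2; that is, there exist Q₀ ∈ P²₂ and a subspace W ⊆ P²₂ with dim(P²₂ / W) ≥ 2 such that S ⊆ Q₀ + W. In particular, the set of quadratic perturbations Q for which the modified coordinate function z̃₁ = z₁ + Q(z₂, z₃) is constant along the fixed holomorphic curve γ has codimension at least 2 in P²₂. -/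
/-!
Let `W` be the space of quadratic polynomials that are constant along the plane curve `(γ₂, γ₃)`.
The difference of two members of `S` lies in `W`, so `S` is contained in `Q₀ + W` for any `Q₀ ∈ S`.

If `S` is nonempty, then `γ₂` and `γ₃` are not both constant, as otherwise `γ₁` would be constant
too.  Let `f` be a nonconstant one, and `X` the corresponding variable.  Then `X` and `X²` are
independent modulo `W`: if `a f + b f² = c` with `(a, b) ≠ 0`, then `f` takes values in the finite
root set of `a X + b X² - c`, hence is constant because `U` is connected.  So `W` has codimension
at least `2`.

If `S` is empty, any `W` of codimension at least `2` will do.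
-/

open MvPolynomial

/-- The polynomials of total degree at most `2` that are constant along `z ↦ (f z, g z)`, `z ∈ U`. -/
def constAlong (U : Set ℂ) (f g : ℂ → ℂ) : Submodule ℂ (restrictTotalDegree (Fin 2) ℂ 2) where
  carrier := {Q | ∃ c : ℂ, ∀ z ∈ U, eval (![f z, g z]) (Q : MvPolynomial (Fin 2) ℂ) = c}
  zero_mem' := ⟨0, fun z _ => by simp⟩
  add_mem' := by
    rintro P Q ⟨c, hc⟩ ⟨d, hd⟩
    exact ⟨c + d, fun z hz => by simp [hc z hz, hd z hz]⟩
  smul_mem' := by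
    rintro a Q ⟨c, hc⟩
    exact ⟨a * c, fun z hz => by simp [smul_eval, hc z hz]⟩

/-- A continuous function on a preconnected set satisfying a nontrivial quadratic or linear
equation is constant, as its values lie in the finite set of roots. -/
lemma const_of_quadratic {U : Set ℂ} (hU : IsPreconnected U) {f : ℂ → ℂ} (hf : ContinuousOn f U)
    {a b c : ℂ} (h : ∀ z ∈ U, a * f z + b * f z ^ 2 = c) (hab : ¬ (a = 0 ∧ b = 0)) :
    ∃ d, ∀ z ∈ U, f z = d := by
  let p : Polynomial ℂ := .C a * .X + .C b * .X ^ 2 - .C c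
  have hp : p ≠ 0 := by
    intro h0
    refine hab ⟨?_, ?_⟩
    · have := congrArg (fun q => Polynomial.coeff q 1) h0
      simpa [p, Polynomial.coeff_X, Polynomial.coeff_C, Polynomial.coeff_X_pow] using this
    · have := congrArg (fun q => Polynomial.coeff q 2) h0
      simpa [p, Polynomial.coeff_X, Polynomial.coeff_C, Polynomial.coeff_X_pow] using this
  have hfin : (f '' U).Finite := by
    refine (Polynomial.finite_setOfPred_isRoot hp).subset ?_
    rintro _ ⟨z, hz, rfl⟩
    simp [p, Polynomial.IsRoot, h z hz]
  have hsub : (f '' U).Subsingleton := by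
    by_contra hns
    rw [Set.not_subsingleton_iff] at hns
    exact (hU.image f hf).infinite_of_nontrivial hns hfin
  rcases U.eq_empty_or_nonempty with rfl | ⟨w, hw⟩
  · exact ⟨0, by simp⟩
  · exact ⟨f w, fun z hz => hsub ⟨z, hz, rfl⟩ ⟨w, hw, rfl⟩⟩

/-- If the `i`-th coordinate of the curve `(f, g)` is nonconstant, then `X i` and `X i ^ 2` are
linearly independent modulo the polynomials constant along the curve. -/
lemma two_le_finrank_quotient_constAlong {U : Set ℂ} (hU : IsPreconnected U) {f g : ℂ → ℂ}
    (i : Fin 2) (hcont : ContinuousOn (fun z => ![f z, g z] i) U)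
    (hnc : ¬ ∃ d, ∀ z ∈ U, ![f z, g z] i = d) :
    2 ≤ Module.finrank ℂ (restrictTotalDegree (Fin 2) ℂ 2 ⧸ constAlong U f g) := by
  let P : restrictTotalDegree (Fin 2) ℂ 2 :=
    ⟨X i, by rw [mem_restrictTotalDegree, totalDegree_X]; norm_num⟩
  let Q : restrictTotalDegree (Fin 2) ℂ 2 :=
    ⟨X i ^ 2, by rw [mem_restrictTotalDegree, totalDegree_X_pow]⟩
  have hli : LinearIndependent ℂ
      ![(constAlong U f g).mkQ P, (constAlong U f g).mkQ Q] := by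
    rw [LinearIndependent.pair_iff]
    intro a b hab
    rw [← map_smul, ← map_smul, ← map_add, Submodule.mkQ_apply,
      Submodule.Quotient.mk_eq_zero] at hab
    obtain ⟨c, hc⟩ := hab
    by_contra hne
    refine hnc (const_of_quadratic hU hcont (a := a) (b := b) (c := c) (fun z hz => ?_) hne)
    simpa [P, Q, smul_eval] using hc z hz
  simpa using hli.fintype_card_le_finrank



/-- Let `U ⊆ ℂ` be a nonempty connected open set and let
`γ = (γ₁, γ₂, γ₃) : U → ℂ³` be a nonconstant holomorphic map.  Then the set
`S = { Q ∈ P²₂ : z ↦ γ₁ z + Q (γ₂ z, γ₃ z) is constant on U }` is contained in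
a coset `Q₀ + W` of a complex linear subspace `W ⊆ P²₂` of codimension at
least `2`. -/
theorem quadratic_perturbation_coset (U : Set ℂ) (hUopen : IsOpen U)
    (hUconn : IsConnected U) (γ₁ γ₂ γ₃ : ℂ → ℂ)
    (h₁ : DifferentiableOn ℂ γ₁ U) (h₂ : DifferentiableOn ℂ γ₂ U)
    (h₃ : DifferentiableOn ℂ γ₃ U)
    (hnc : ¬ ∃ c : ℂ × ℂ × ℂ, ∀ z ∈ U, (γ₁ z, γ₂ z, γ₃ z) = c) :
    ∃ (Q₀ : MvPolynomial.restrictTotalDegree (Fin 2) ℂ 2)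
      (W : Submodule ℂ (MvPolynomial.restrictTotalDegree (Fin 2) ℂ 2)),
      2 ≤ Module.finrank ℂ ((MvPolynomial.restrictTotalDegree (Fin 2) ℂ 2) ⧸ W) ∧
      {Q : MvPolynomial.restrictTotalDegree (Fin 2) ℂ 2 | ∃ c : ℂ, ∀ z ∈ U,
          γ₁ z + MvPolynomial.eval (![γ₂ z, γ₃ z]) (Q : MvPolynomial (Fin 2) ℂ) = c}
        ⊆ (fun w => Q₀ + w) '' (W : Set (MvPolynomial.restrictTotalDegree (Fin 2) ℂ 2)) := by
  rcases Set.eq_empty_or_nonempty {Q : restrictTotalDegree (Fin 2) ℂ 2 | ∃ c : ℂ, ∀ z ∈ U,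
      γ₁ z + eval (![γ₂ z, γ₃ z]) (Q : MvPolynomial (Fin 2) ℂ) = c} with hS | ⟨Q₀, c₀, hc₀⟩
  -- Any nonconstant curve supplies a subspace of codimension at least `2`.
  · refine ⟨0, constAlong Set.univ id id, ?_, by rw [hS]; exact Set.empty_subset _⟩
    refine two_le_finrank_quotient_constAlong isPreconnected_univ 0
      continuousOn_id ?_
    rintro ⟨d, hd⟩
    have h0 := hd 0 trivial
    have h1 := hd 1 trivial
    simp only [Matrix.cons_val_zero, id] at h0 h1
    exact zero_ne_one (h0.trans h1.symm)
  · refine ⟨Q₀, constAlong U γ₂ γ₃, ?_, ?_⟩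
    · by_cases hc2 : ∃ d, ∀ z ∈ U, γ₂ z = d
      · by_cases hc3 : ∃ d, ∀ z ∈ U, γ₃ z = d
        · obtain ⟨d, hd⟩ := hc2
          obtain ⟨e, he⟩ := hc3
          refine absurd ⟨(c₀ - eval ![d, e] (Q₀ : MvPolynomial (Fin 2) ℂ), d, e),
            fun z hz => ?_⟩ hnc
          have := hc₀ z hz
          rw [hd z hz, he z hz] at this ⊢
          rw [← this, add_sub_cancel_right]
        · exact two_le_finrank_quotient_constAlong hUconn.isPreconnected 1
            (by simpa using h₃.continuousOn) (by simpa using hc3)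
      · exact two_le_finrank_quotient_constAlong hUconn.isPreconnected 0
          (by simpa using h₂.continuousOn) (by simpa using hc2)
    · rintro Q ⟨c, hc⟩
      refine ⟨Q - Q₀, ⟨c - c₀, fun z hz => ?_⟩, by simp⟩
      rw [← hc z hz, ← hc₀ z hz]
      simp
end
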